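/- arXiv:2310.14821 — 4 statements merged into one kernel-verified Lean document; each statement's English description precedes it below -/
import Mathlib

section
/- Let f ≥ 1 and n = 3f+1. For every subset H of ZMod n with |H| ≥ 2f+1, there exist three cyclically consecutive elements of H: there is some x ∈ ZMod n with x ∈ H, x+1 ∈ H, and x+2 ∈ H. -/
/-! A translate `x + T` fails to lie inside `H` exactly when `x = b - t` for some `b ∉ H` and
`t ∈ T`, so at most `|Hᶜ| |T|` of the elements `x` are bad. For the pattern `T = {0, 1, 2}` some
`x` is good as soon as `3 |Hᶜ| < |G|`, that is, as soon as `H` has density greater than `2 / 3`. -/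

open scoped Finset Pointwise

section AddGroup

variable {G : Type*} [AddGroup G] [Fintype G] [DecidableEq G]

theorem vadd_finset_subset_iff_notMem_compl_sub {H T : Finset G} {x : G} :
    x +ᵥ T ⊆ H ↔ x ∉ Hᶜ - T := by
  constructor
  · intro hsub hx
    obtain ⟨b, hb, t, ht, rfl⟩ := Finset.mem_sub.mp hx
    have hbH : b - t + t ∈ H := hsub (Finset.vadd_mem_vadd_finset ht)
    rw [sub_add_cancel] at hbH
    exact Finset.mem_compl.mp hb hbH
  · intro hx b hb
    obtain ⟨t, ht, rfl⟩ := Finset.mem_vadd_finset.mp hb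
    by_contra hxt
    exact hx (Finset.mem_sub.mpr ⟨x + t, Finset.mem_compl.mpr hxt, t, ht, add_sub_cancel_right x t⟩)

theorem exists_vadd_finset_subset_of_card_compl_mul_card_lt {H T : Finset G}
    (h : #Hᶜ * #T < Fintype.card G) : ∃ x : G, x +ᵥ T ⊆ H := by
  have hcard : #(Hᶜ - T) < #(Finset.univ : Finset G) := Finset.card_sub_le.trans_lt h
  obtain ⟨x, -, hx⟩ := Finset.exists_mem_notMem_of_card_lt_card hcard
  exact ⟨x, vadd_finset_subset_iff_notMem_compl_sub.mpr hx⟩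

end AddGroup

theorem three_cyclically_consecutive_general {G : Type*} [AddGroupWithOne G] [Fintype G]
    (H : Finset G) (hH : 2 * Fintype.card G < 3 * #H) :
    ∃ x : G, x ∈ H ∧ x + 1 ∈ H ∧ x + 2 ∈ H := by
  classical
  have hcard : #Hᶜ * #({0, 1, 2} : Finset G) < Fintype.card G := calc
    #Hᶜ * #({0, 1, 2} : Finset G) ≤ #Hᶜ * 3 := Nat.mul_le_mul_left _ Finset.card_le_three
    _ < Fintype.card G := by
      have := H.card_add_card_compl
      lia
  obtain ⟨x, hx⟩ := exists_vadd_finset_subset_of_card_compl_mul_card_lt hcard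
  have hmem {t : G} (ht : t ∈ ({0, 1, 2} : Finset G)) : x + t ∈ H :=
    hx (Finset.vadd_mem_vadd_finset ht)
  exact ⟨x, by simpa using hmem (t := 0) (by simp), hmem (by simp), hmem (by simp)⟩

/-- Among residues modulo `n = 3f+1` (with `f ≥ 1`), any subset of size at
least `2f+1` contains three cyclically consecutive elements. -/
theorem three_cyclically_consecutive (f : ℕ) (hf : 1 ≤ f)
    (H : Finset (ZMod (3 * f + 1))) (hH : 2 * f + 1 ≤ H.card) :
    ∃ x : ZMod (3 * f + 1), x ∈ H ∧ x + 1 ∈ H ∧ x + 2 ∈ H := by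
  have hdensity : 2 * Fintype.card (ZMod (3 * f + 1)) < 3 * #H := by
    rw [ZMod.card]
    lia
  exact three_cyclically_consecutive_general H hdensity
end

section
/- Let f ≥ 1, n = 3f+1, and let H ⊆ ZMod n with |H| ≥ 2f+1 (the honest validators). Then for every natural number a, there exists a natural number i with a ≤ i ≤ a + 3f such that the residues of i, i+1, and i+2 modulo n all lie in H. In other words, under the round-robin schedule in which the primary proposer of round r is validator r mod (3f+1), any window of 3f+3 consecutive rounds contains three consecutive rounds whose primary proposers are all honest. -/
/-!
For each `j < k`, round `i + j` falls on a validator outside `H` for exactly `#Hᶜ` residues `i`,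
so by the union bound `k * #Hᶜ < n` leaves a residue that is good for every `j`, and any `n`
consecutive rounds contain a representative of it. With `n = 3 * f + 1`, `k = 3` and `#Hᶜ ≤ f`
there is exactly enough room.
-/

open Finset

theorem exists_forall_mem_of_card_mul_card_compl_lt {ι α β : Type*} [Fintype α] [Fintype β]
    [DecidableEq β] {e : ι → α → β} {t : Finset ι} {s : Finset β}
    (he : ∀ i ∈ t, Function.Injective (e i)) (hcard : #t * #sᶜ < Fintype.card α) :
    ∃ x, ∀ i ∈ t, e i x ∈ s := by
  classical
  let bad (i : ι) : Finset α := {x | e i x ∉ s}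
  have card_bad_le : ∀ i ∈ t, #(bad i) ≤ #sᶜ := fun i hi ↦
    card_le_card_of_injOn (e i) (by simp [bad, Set.MapsTo]) (he i hi).injOn
  obtain ⟨x, -, hx⟩ : ∃ x ∈ univ, x ∉ t.biUnion bad :=
    exists_mem_notMem_of_card_lt_card
      ((card_biUnion_le_card_mul t bad _ card_bad_le).trans_lt hcard)
  exact ⟨x, by simpa [bad] using hx⟩

theorem exists_mem_Ico_natCast_eq {n : ℕ} [NeZero n] (a : ℕ) (x : ZMod n) :
    ∃ i ∈ Ico a (a + n), (i : ZMod n) = x :=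
  ⟨a + (x - a).val, by simp [ZMod.val_lt], by simp⟩

theorem three_consecutive_honest_rounds_general {n k : ℕ} [NeZero n] {H : Finset (ZMod n)}
    (hH : k * #Hᶜ < n) (a : ℕ) :
    ∃ i ∈ Ico a (a + n), ∀ j < k, ((i + j : ℕ) : ZMod n) ∈ H := by
  obtain ⟨x, hx⟩ : ∃ x : ZMod n, ∀ j ∈ range k, x + (j : ZMod n) ∈ H :=
    exists_forall_mem_of_card_mul_card_compl_lt (fun j _ ↦ add_left_injective (j : ZMod n))
      (by simpa using hH)
  obtain ⟨i, hi, rfl⟩ := exists_mem_Ico_natCast_eq a x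
  exact ⟨i, hi, by simpa using hx⟩

/-- Lemma `3-consecutive`: with the round-robin schedule assigning round `r`
to validator `r mod (3f+1)`, if at least `2f+1` of the `3f+1` residues are
honest, then any window of `3f+3` consecutive rounds (rounds `a` to `a+3f+2`)
contains three consecutive rounds `i`, `i+1`, `i+2` whose primary proposers
are all honest. -/
theorem three_consecutive_honest_rounds (f : ℕ) (hf : 1 ≤ f)
    (H : Finset (ZMod (3 * f + 1))) (hH : 2 * f + 1 ≤ H.card) (a : ℕ) :
    ∃ i : ℕ, a ≤ i ∧ i ≤ a + 3 * f ∧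
      ((i : ZMod (3 * f + 1)) ∈ H ∧
       ((i + 1 : ℕ) : ZMod (3 * f + 1)) ∈ H ∧
       ((i + 2 : ℕ) : ZMod (3 * f + 1)) ∈ H) := by
  have hcompl : 3 * #Hᶜ < 3 * f + 1 := by
    rw [card_compl, ZMod.card]
    omega
  obtain ⟨i, hi, hmem⟩ := three_consecutive_honest_rounds_general hcompl a
  rw [mem_Ico] at hi
  exact ⟨i, hi.1, by omega, hmem 0 (by simp), hmem 1 (by simp), hmem 2 (by simp)⟩
end

section
/- Let V be a finite type of validators with |V| = 3f+1 and let Byz ⊆ V with |Byz| ≤ f. Let Block be a type with author : Block → V and round : Block → ℕ and a parent relation P, with ancestry the reflexive-transitive closure of P. Assume: (i) every block b with round(b) ≥ 1 has among its parents blocks of round round(b) − 1 authored by at least 2f+1 pairwise distinct validators; and (ii) honest validators do not equivocate: for every v ∉ Byz and every round r there is at most one block with author v and round r. Let x be a round and let Cert be a set of blocks, all of round x, with pairwise distinct authors and |Cert| ≥ 2f+1 (the blocks of round x certifying a block B). Then every block b with round(b) > x has some element of Cert among its ancestors. -/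
/-!
Among `3f+1` validators, two quorums of `2f+1` share at least `f+1` members, hence an honest one.
For a block of round `x+1`, apply this to the authors of its round-`x` parents and the authors of
the certificates: the honest common author made only one block in round `x`, so a parent is a
certificate. Above round `x+1`, following one parent per round descends to round `x+1`.
-/

/-- The authors of the preceding-round parents of `b`, the set that block validity requires to be
a quorum. Truncated subtraction makes round `0` its own preceding round. -/
def parentAuthors {V Block : Type*} (author : Block → V) (round : Block → ℕ)
    (P : Block → Block → Prop) (b : Block) : Set V :=
  {v | ∃ p, P p b ∧ round p = round b - 1 ∧ author p = v}

theorem exists_mem_inter_notMem_of_card_add_lt {V : Type*} [Finite V] {A B Z : Set V}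
    (h : Nat.card V + Z.ncard < A.ncard + B.ncard) : ∃ v ∈ A ∩ B, v ∉ Z := by
  have inter_large : Z.ncard < (A ∩ B).ncard := by
    have := Set.ncard_union_add_ncard_inter A B
    have := Set.ncard_le_card (A ∪ B)
    omega
  exact Set.exists_mem_notMem_of_ncard_lt_ncard inter_large

section DAG

variable {V Block : Type*} {author : Block → V} {round : Block → ℕ} {P : Block → Block → Prop}
  {C : Set Block} {b : Block}

theorem exists_parent_mem_of_card_add_lt [Finite V] {Byz : Set V}
    (no_equivocation : ∀ v, v ∉ Byz → ∀ b₁ b₂, author b₁ = v → author b₂ = v →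
      round b₁ = round b₂ → b₁ = b₂)
    (round_mem : ∀ c ∈ C, round c + 1 = round b)
    (h : Nat.card V + Byz.ncard <
      (parentAuthors author round P b).ncard + (author '' C).ncard) :
    ∃ c ∈ C, P c b := by
  obtain ⟨v, ⟨⟨p, parent, round_p, author_p⟩, c, hc, author_c⟩, honest⟩ :=
    exists_mem_inter_notMem_of_card_add_lt h
  have same_round : round p = round c := by
    have := round_mem c hc
    omega
  obtain rfl : p = c := no_equivocation v honest p c author_p author_c same_round
  exact ⟨p, hc, parent⟩

theorem exists_parent_of_parentAuthors_nonempty (hb : 1 ≤ round b)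
    (h : (parentAuthors author round P b).Nonempty) : ∃ p, P p b ∧ round p + 1 = round b := by
  obtain ⟨-, p, parent, round_p, -⟩ := h
  exact ⟨p, parent, by omega⟩

theorem exists_reflTransGen_of_succ_round {x : ℕ}
    (base : ∀ b, round b = x + 1 → ∃ c ∈ C, Relation.ReflTransGen P c b)
    (step : ∀ b, x + 1 < round b → ∃ p, P p b ∧ round p + 1 = round b)
    (hb : x < round b) : ∃ c ∈ C, Relation.ReflTransGen P c b := by
  induction hr : round b, Nat.succ_le_of_lt hb using Nat.le_induction generalizing b with
  | base => exact base b hr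
  | succ r hxr ih =>
    obtain ⟨p, parent, round_p⟩ := step b (by omega)
    obtain ⟨c, hc, ancestor⟩ := ih (b := p) (by omega) (by omega)
    exact ⟨c, hc, ancestor.tail parent⟩

end DAG

/-- Lemma `recursion-safety`: with `3f+1` validators of which at most `f` are
Byzantine, if every block of round `≥ 1` references parents of the preceding
round from at least `2f+1` distinct authors, honest validators never
equivocate, and `Cert` is a set of at least `2f+1` blocks of round `x` with
pairwise distinct authors (the blocks certifying some block `B`), then every
block of round `> x` has some element of `Cert` among its ancestors.  Here
`P p b` means that `p` is a parent of `b`, and ancestry is the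
reflexive-transitive closure of `P`. -/
theorem recursion_safety {V : Type*} [Fintype V] [DecidableEq V]
    {Block : Type*} (author : Block → V) (round : Block → ℕ)
    (P : Block → Block → Prop) (f : ℕ) (hV : Fintype.card V = 3 * f + 1)
    (Byz : Finset V) (hByz : Byz.card ≤ f)
    (validity : ∀ b : Block, 1 ≤ round b →
      2 * f + 1 ≤ {v : V | ∃ p : Block, P p b ∧ round p = round b - 1 ∧
        author p = v}.ncard)
    (no_equivocation : ∀ v : V, v ∉ Byz → ∀ b₁ b₂ : Block,
      author b₁ = v → author b₂ = v → round b₁ = round b₂ → b₁ = b₂)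
    (x : ℕ) (Cert : Set Block)
    (hCertRound : ∀ c ∈ Cert, round c = x)
    (hCertAuthors : ∀ c₁ ∈ Cert, ∀ c₂ ∈ Cert, author c₁ = author c₂ → c₁ = c₂)
    (hCertCard : 2 * f + 1 ≤ Cert.ncard) :
    ∀ b : Block, x < round b → ∃ c ∈ Cert, Relation.ReflTransGen P c b := by
  have quorum (b : Block) (hb : x < round b) :
      2 * f + 1 ≤ (parentAuthors author round P b).ncard := validity b (by omega)
  have cert_quorum : 2 * f + 1 ≤ (author '' Cert).ncard := by
    rwa [Set.InjOn.ncard_image fun c₁ h₁ c₂ h₂ => hCertAuthors c₁ h₁ c₂ h₂]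
  refine fun _ => exists_reflTransGen_of_succ_round ?_ ?_
  · intro b hb
    have counting : Nat.card V + (Byz : Set V).ncard <
        (parentAuthors author round P b).ncard + (author '' Cert).ncard := by
      have := quorum b (by omega)
      rw [Nat.card_eq_fintype_card, Set.ncard_coe_finset]
      omega
    obtain ⟨c, hc, parent⟩ := exists_parent_mem_of_card_add_lt no_equivocation
      (fun c hc => by rw [hCertRound c hc, hb]) counting
    exact ⟨c, hc, .single parent⟩
  · intro b hb
    have nonempty : (parentAuthors author round P b).Nonempty :=
      Set.nonempty_of_ncard_ne_zero (by have := quorum b (by omega); omega)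
    exact exists_parent_of_parentAuthors_nonempty (by omega) nonempty
end

section
/- Let V be a finite set of validators with |V| = 3f+1 and Byz ⊆ V with |Byz| ≤ f. Let Block be a type with author : Block → V, round : Block → ℕ, a reflexive and transitive ancestor relation ⪯, a bit : Block → Bool (the epoch-change bit), and a predicate certifies : Block → Prop (the block certifies the fast-path transaction tx). Assume: (i) honest chaining: for every v ∉ Byz and blocks b₁, b₂ authored by v with round(b₁) < round(b₂), b₁ ⪯ b₂; (ii) honest bit monotonicity: for every v ∉ Byz and blocks b₁, b₂ authored by v, if bit(b₂) = true and round(b₁) ≥ round(b₂) then bit(b₁) = true; (iii) blocks with the epoch-change bit set do not certify: if bit(b) = true then ¬certifies(b); (iv) the set Committed ⊆ Block is downward closed under ancestry: if b ∈ Committed and b′ ⪯ b then b′ ∈ Committed. Suppose there is a set C ⊆ V with |C| ≥ 2f+1 such that each v ∈ C authors some block b with certifies(b) (tx is finalized), and a set E ⊆ V with |E| ≥ 2f+1 such that each v ∈ E authors some block b ∈ Committed with bit(b) = true (the epoch is closed). Then some block in Committed certifies tx. -/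
/-!
Two quorums overlap in more validators than can be Byzantine, so some honest validator `v` authored
both a certifying block `b` and a committed block `e` with the epoch-change bit set. If `b` were not
of an earlier round than `e`, the bit would persist to `b`, which could then not certify. So `b`
precedes `e` in the chain of `v` and is committed together with the causal history of `e`.
-/

theorem card_add_card_le_card_add_card_inter {α : Type*} [DecidableEq α] {s t u : Finset α}
    (hs : s ⊆ u) (ht : t ⊆ u) : s.card + t.card ≤ u.card + (s ∩ t).card := by
  rw [← Finset.card_union_add_card_inter]
  gcongr
  exact Finset.union_subset hs ht

section SingleAuthor

variable {V Block R : Type*} [LinearOrder R] {author : Block → V} {round : Block → R}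
  {bit : Block → Bool} {certifies : Block → Prop} {v : V} {b e : Block}

theorem round_lt_round_of_certifies_of_bit
    (bit_mono : ∀ b₁ b₂ : Block, author b₁ = v → author b₂ = v → bit b₂ = true →
      round b₂ ≤ round b₁ → bit b₁ = true)
    (bit_no_certify : ∀ b : Block, bit b = true → ¬ certifies b)
    (hb : author b = v) (he : author e = v) (b_certifies : certifies b) (e_bit : bit e = true) :
    round b < round e := by
  by_contra! hle
  exact bit_no_certify b (bit_mono b e hb he e_bit hle) b_certifies

theorem mem_committed_of_certifies_of_bit {anc : Block → Block → Prop} {Committed : Set Block}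
    (chain : ∀ b₁ b₂ : Block, author b₁ = v → author b₂ = v → round b₁ < round b₂ → anc b₁ b₂)
    (bit_mono : ∀ b₁ b₂ : Block, author b₁ = v → author b₂ = v → bit b₂ = true →
      round b₂ ≤ round b₁ → bit b₁ = true)
    (bit_no_certify : ∀ b : Block, bit b = true → ¬ certifies b)
    (committed_closed : ∀ b ∈ Committed, ∀ b' : Block, anc b' b → b' ∈ Committed)
    (hb : author b = v) (he : author e = v) (b_certifies : certifies b)
    (e_committed : e ∈ Committed) (e_bit : bit e = true) : b ∈ Committed :=
  have hlt : round b < round e :=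
    round_lt_round_of_certifies_of_bit bit_mono bit_no_certify hb he b_certifies e_bit
  committed_closed e e_committed b (chain b e hb he hlt)

end SingleAuthor

theorem epoch_close_safety_general {V Block R : Type*} [DecidableEq V] [LinearOrder R]
    (author : Block → V) (round : Block → R) (anc : Block → Block → Prop) (bit : Block → Bool)
    (certifies : Block → Prop) (Committed : Set Block) (Byz : Finset V)
    (honest_chain : ∀ v : V, v ∉ Byz → ∀ b₁ b₂ : Block,
      author b₁ = v → author b₂ = v → round b₁ < round b₂ → anc b₁ b₂)
    (honest_bit_mono : ∀ v : V, v ∉ Byz → ∀ b₁ b₂ : Block,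
      author b₁ = v → author b₂ = v → bit b₂ = true → round b₂ ≤ round b₁ → bit b₁ = true)
    (bit_no_certify : ∀ b : Block, bit b = true → ¬ certifies b)
    (committed_closed : ∀ b ∈ Committed, ∀ b' : Block, anc b' b → b' ∈ Committed)
    (C E : Finset V) (hCE : Byz.card < (C ∩ E).card)
    (hC : ∀ v ∈ C, ∃ b : Block, author b = v ∧ certifies b)
    (hE : ∀ v ∈ E, ∃ b : Block, author b = v ∧ b ∈ Committed ∧ bit b = true) :
    ∃ b ∈ Committed, certifies b := by
  obtain ⟨v, v_mem, v_honest⟩ := Finset.exists_mem_notMem_of_card_lt_card hCE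
  obtain ⟨v_mem_C, v_mem_E⟩ := Finset.mem_inter.mp v_mem
  obtain ⟨b, hb, b_certifies⟩ := hC v v_mem_C
  obtain ⟨e, he, e_committed, e_bit⟩ := hE v v_mem_E
  have b_committed : b ∈ Committed :=
    mem_committed_of_certifies_of_bit (honest_chain v v_honest) (honest_bit_mono v v_honest)
      bit_no_certify committed_closed hb he b_certifies e_committed e_bit
  exact ⟨b, b_committed, b_certifies⟩

/-- Quorum core of Theorem `epoch close safety` for Mysticeti-FPC: if a
fast-path transaction is finalized (blocks certifying it are authored by a
quorum `C` of at least `2f+1` validators) and the epoch is closed (committed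
blocks with the epoch-change bit set are authored by a quorum `E` of at least
`2f+1` validators), then some committed block certifies the transaction. -/
theorem epoch_close_safety {V : Type*} [Fintype V] [DecidableEq V]
    {Block : Type*} (author : Block → V) (round : Block → ℕ)
    (anc : Block → Block → Prop) (bit : Block → Bool)
    (certifies : Block → Prop) (Committed : Set Block)
    (f : ℕ) (hV : Fintype.card V = 3 * f + 1)
    (Byz : Finset V) (hByz : Byz.card ≤ f)
    (anc_refl : ∀ b : Block, anc b b)
    (anc_trans : ∀ b₁ b₂ b₃ : Block, anc b₁ b₂ → anc b₂ b₃ → anc b₁ b₃)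
    (honest_chain : ∀ v : V, v ∉ Byz → ∀ b₁ b₂ : Block,
      author b₁ = v → author b₂ = v → round b₁ < round b₂ → anc b₁ b₂)
    (honest_bit_mono : ∀ v : V, v ∉ Byz → ∀ b₁ b₂ : Block,
      author b₁ = v → author b₂ = v → bit b₂ = true → round b₂ ≤ round b₁ →
      bit b₁ = true)
    (bit_no_certify : ∀ b : Block, bit b = true → ¬ certifies b)
    (committed_closed : ∀ b ∈ Committed, ∀ b' : Block, anc b' b →
      b' ∈ Committed)
    (C : Finset V) (hCcard : 2 * f + 1 ≤ C.card)
    (hC : ∀ v ∈ C, ∃ b : Block, author b = v ∧ certifies b)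
    (E : Finset V) (hEcard : 2 * f + 1 ≤ E.card)
    (hE : ∀ v ∈ E, ∃ b : Block, author b = v ∧ b ∈ Committed ∧ bit b = true) :
    ∃ b ∈ Committed, certifies b := by
  have quorum_overlap : C.card + E.card ≤ Fintype.card V + (C ∩ E).card :=
    card_add_card_le_card_add_card_inter C.subset_univ E.subset_univ
  exact epoch_close_safety_general author round anc bit certifies Committed Byz honest_chain
    honest_bit_mono bit_no_certify committed_closed C E (by lia) hC hE
end
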